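/- Fix E > 0 and let V ∈ L^∞(ℝ^n) be continuous with max V = 0. The Γ(L²)-limit J̄ of the Jacobi energies J_E^ε[γ] = ∫_0^1 2(E − V(γ/ε))‖γ'‖² ds (as ε → 0) has integrand j̄ : ℝ^n → ℝ satisfying the bounds 2E‖z‖² ≤ j̄(z) ≤ 2(E − min V)‖z‖² for all z ∈ ℝ^n, and j̄ is convex and 2-homogeneous. -/

import Mathlib

open Real intervalIntegral Filter

lemma aux_psi (c : ℝ) (hc : 1 < c) : ∃ ψ w : ℝ → ℝ, Continuous w ∧ (∀ s, HasDerivAt ψ (w s) s) ∧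
    (∀ s, 0 ≤ w s) ∧ (∀ s, w s ≤ c) ∧ (∀ s ≤ 0, w s = 0) ∧ (∀ s, 1 ≤ s → w s = 0) ∧
    (∀ s ≤ 0, ψ s = 0) ∧ (∀ s, 1 ≤ s → ψ s = 1) := by
  obtain ⟨k, hk⟩ := exists_nat_gt (1 / (c - 1))
  have hc' : 0 < c - 1 := by linarith
  have hk0 : (0:ℝ) < k := lt_trans (by positivity) hk
  have hkc : 1 < k * (c - 1) := by rwa [div_lt_iff₀ hc'] at hk
  set d : ℝ := (2 * k + 1) / (2 * k) with hd
  have hd0 : 0 < d := by positivity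
  have hdc : d ≤ c := by rw [hd, div_le_iff₀ (by positivity)]; nlinarith
  let w : ℝ → ℝ := fun s => d * max 0 (1 - (2 * s - 1) ^ (2 * k))
  have hw : Continuous w := by fun_prop
  have hout : ∀ s : ℝ, 1 ≤ (2 * s - 1) ^ 2 → w s = 0 := by
    intro s hs
    have : 1 ≤ (2 * s - 1) ^ (2 * k) := by rw [pow_mul]; exact one_le_pow₀ hs
    simp only [w]; rw [max_eq_left (by linarith)]; simp
  have h0 : ∀ s ≤ 0, w s = 0 := fun s hs => hout s (by nlinarith)
  have h1 : ∀ s, 1 ≤ s → w s = 0 := fun s hs => hout s (by nlinarith)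
  have hI : ∫ u in (0:ℝ)..1, w u = 1 := by
    have e : ∀ u ∈ Set.uIcc (0:ℝ) 1, w u = d * (1 - (2 * u - 1) ^ (2 * k)) := by
      intro u hu
      rw [Set.uIcc_of_le zero_le_one] at hu
      have : (2 * u - 1) ^ (2 * k) ≤ 1 := by
        rw [pow_mul]; exact pow_le_one₀ (sq_nonneg _) (by nlinarith [hu.1, hu.2])
      simp only [w]; rw [max_eq_right (by linarith)]
    rw [integral_congr e]
    have hder : ∀ u ∈ Set.uIcc (0:ℝ) 1, HasDerivAt
        (fun u : ℝ => d * (u - (2 * u - 1) ^ (2 * k + 1) / (2 * (2 * k + 1))))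
        (d * (1 - (2 * u - 1) ^ (2 * k))) u := by
      intro u _
      have a1 : HasDerivAt (fun u : ℝ => 2 * u - 1) 2 u := by
        simpa using ((hasDerivAt_id u).const_mul 2).sub_const 1
      have := (((hasDerivAt_id u).sub ((a1.pow (2 * k + 1)).div_const (2 * (2 * k + 1)))).const_mul d)
      refine HasDerivAt.congr_deriv this ?_
      rw [Nat.add_sub_cancel]
      push_cast
      field_simp
    rw [integral_eq_sub_of_hasDerivAt hder (Continuous.intervalIntegrable (by fun_prop) _ _)]
    have : (-1:ℝ) ^ (2 * k + 1) = -1 := by rw [pow_succ, pow_mul]; simp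
    norm_num [this]
    rw [hd]; field_simp; ring
  have hint : ∀ a b, IntervalIntegrable w MeasureTheory.volume a b := fun a b => hw.intervalIntegrable a b
  refine ⟨fun s => ∫ u in (0:ℝ)..s, w u, w, hw, ?_, ?_, ?_, h0, h1, ?_, ?_⟩
  · intro s
    exact integral_hasDerivAt_right (hint _ _) hw.stronglyMeasurable.stronglyMeasurableAtFilter hw.continuousAt
  · intro s; positivity
  · intro s
    have : 0 ≤ (2 * s - 1) ^ (2 * k) := by rw [pow_mul]; positivity
    have : max 0 (1 - (2 * s - 1) ^ (2 * k)) ≤ 1 := max_le zero_le_one (by linarith)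
    simp only [w]
    nlinarith
  · intro s hs
    have e : ∀ u ∈ Set.uIcc (0:ℝ) s, w u = 0 := by
      intro u hu; rw [Set.uIcc_of_ge hs] at hu; exact h0 u hu.2
    show ∫ u in (0:ℝ)..s, w u = 0
    rw [integral_congr e]; simp
  · intro s hs
    have e : ∀ u ∈ Set.uIcc (1:ℝ) s, w u = 0 := by
      intro u hu; rw [Set.uIcc_of_le hs] at hu; exact h1 u hu.1
    show ∫ u in (0:ℝ)..s, w u = 1
    rw [← integral_add_adjacent_intervals (hint 0 1) (hint 1 s), integral_congr e, hI]; simp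

/-- energies of C¹ paths from p to q -/
def pathE {n : ℕ} (f : EuclideanSpace ℝ (Fin n) → ℝ) (p q : EuclideanSpace ℝ (Fin n)) : Set ℝ :=
  {a : ℝ | ∃ γ γ' : ℝ → EuclideanSpace ℝ (Fin n),
            (∀ s ∈ Set.Icc (0:ℝ) 1, HasDerivAt γ (γ' s) s) ∧
            ContinuousOn γ' (Set.Icc (0:ℝ) 1) ∧ γ 0 = p ∧ γ 1 = q ∧
            a = ∫ s in (0:ℝ)..1, f (γ s) * ‖γ' s‖ ^ 2}

section Aux

variable {n : ℕ} {f : EuclideanSpace ℝ (Fin n) → ℝ} {p q r : EuclideanSpace ℝ (Fin n)}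

lemma pathE_nonneg (hf : ∀ x, 0 ≤ f x) {a : ℝ} (ha : a ∈ pathE f p q) : 0 ≤ a := by
  obtain ⟨γ, γ', -, -, -, -, rfl⟩ := ha
  exact integral_nonneg zero_le_one (fun s _ => mul_nonneg (hf _) (by positivity))

lemma pathE_bdd (hf : ∀ x, 0 ≤ f x) : BddBelow (pathE f p q) := ⟨0, fun _ ha => pathE_nonneg hf ha⟩

lemma pathE_line (hfc : Continuous f) (M : ℝ) (hM : ∀ x, f x ≤ M) :
    ∃ a ∈ pathE f p q, a ≤ M * ‖q - p‖ ^ 2 := by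
  refine ⟨_, ⟨fun s => p + s • (q - p), fun _ => q - p, ?_, continuousOn_const, by simp, by simp, rfl⟩, ?_⟩
  · intro s _
    simpa using ((hasDerivAt_id s).smul_const (q - p)).const_add p
  · calc _ ≤ ∫ s in (0:ℝ)..1, M * ‖q - p‖ ^ 2 := by
          apply integral_mono_on zero_le_one
          · exact Continuous.intervalIntegrable (by fun_prop) _ _
          · simp
          · intro s _; exact mul_le_mul_of_nonneg_right (hM _) (by positivity)
      _ = _ := by simp

lemma pathE_lower (hfc : Continuous f) (m : ℝ) (hm0 : 0 ≤ m) (hm : ∀ x, m ≤ f x) {a : ℝ}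
    (ha : a ∈ pathE f p q) : m * ‖q - p‖ ^ 2 ≤ a := by
  obtain ⟨γ, γ', hd, hc, h0, h1, rfl⟩ := ha
  have hγ : ContinuousOn γ (Set.Icc 0 1) := fun s hs => (hd s hs).continuousAt.continuousWithinAt
  have hI : ∫ s in (0:ℝ)..1, m * (2 * inner ℝ (q - p) (γ' s) - ‖q - p‖ ^ 2) = m * ‖q - p‖ ^ 2 := by
    have : ∀ s ∈ Set.uIcc (0:ℝ) 1, HasDerivAt
        (fun s => m * (2 * inner ℝ (q - p) (γ s) - s * ‖q - p‖ ^ 2))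
        (m * (2 * inner ℝ (q - p) (γ' s) - ‖q - p‖ ^ 2)) s := by
      intro s hs
      rw [Set.uIcc_of_le zero_le_one] at hs
      have a1 := (hasDerivAt_const s (q - p)).inner ℝ (hd s hs)
      have a2 := ((a1.const_mul 2).sub ((hasDerivAt_id s).mul_const (‖q - p‖ ^ 2))).const_mul m
      simpa using a2
    rw [integral_eq_sub_of_hasDerivAt this]
    · rw [h0, h1, ← real_inner_self_eq_norm_sq]
      have := inner_sub_right (𝕜 := ℝ) (q - p) q p
      rw [this]; ring
    · apply ContinuousOn.intervalIntegrable_of_Icc zero_le_one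
      fun_prop
  rw [← hI]
  apply integral_mono_on zero_le_one
  · apply ContinuousOn.intervalIntegrable_of_Icc zero_le_one
    fun_prop
  · apply ContinuousOn.intervalIntegrable_of_Icc zero_le_one
    have := hfc.comp_continuousOn hγ
    exact this.mul (by fun_prop)
  · intro s _
    have := @norm_sub_sq_real _ _ _ (q - p) (γ' s)
    have h3 : 2 * inner ℝ (q - p) (γ' s) - ‖q - p‖ ^ 2 ≤ ‖γ' s‖ ^ 2 := by
      nlinarith [sq_nonneg ‖q - p - γ' s‖]
    calc _ ≤ m * ‖γ' s‖ ^ 2 := mul_le_mul_of_nonneg_left h3 hm0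
      _ ≤ _ := mul_le_mul_of_nonneg_right (hm _) (by positivity)

lemma pathE_concat (hfc : Continuous f) (hf : ∀ x, 0 ≤ f x) {a b t c : ℝ} (ht0 : 0 < t) (ht1 : t < 1)
    (hc : 1 < c) (ha : a ∈ pathE f p q) (hb : b ∈ pathE f q r) :
    ∃ e ∈ pathE f p r, e ≤ c * (a / t + b / (1 - t)) := by
  obtain ⟨ψ, w, hw, hψ, hw0, hwc, hwl, hwr, hl, hr⟩ := aux_psi c hc
  have hmono : Monotone ψ := monotone_of_hasDerivAt_nonneg hψ hw0
  have hψm : ∀ s, ψ s ∈ Set.Icc (0:ℝ) 1 := by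
    intro s
    constructor
    · rw [← hl (min s 0) (min_le_right _ _)]; exact hmono (min_le_left _ _)
    · rw [← hr (max s 1) (le_max_right _ _)]; exact hmono (le_max_left _ _)
  have hψc : Continuous ψ := continuous_iff_continuousAt.2 fun s => (hψ s).continuousAt
  have ht1' : 0 < 1 - t := by linarith
  -- one piece
  have piece : ∀ (γ γ' : ℝ → EuclideanSpace ℝ (Fin n)) (u τ : ℝ), 0 < τ →
      (∀ s ∈ Set.Icc (0:ℝ) 1, HasDerivAt γ (γ' s) s) → ContinuousOn γ' (Set.Icc (0:ℝ) 1) →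
      (∀ s, HasDerivAt (fun s => γ (ψ ((s - u) / τ))) ((w ((s - u) / τ) / τ) • γ' (ψ ((s - u) / τ))) s) ∧
      Continuous (fun s => (w ((s - u) / τ) / τ) • γ' (ψ ((s - u) / τ))) ∧
      ∫ s in u..(u + τ), f (γ (ψ ((s - u) / τ))) * ‖(w ((s - u) / τ) / τ) • γ' (ψ ((s - u) / τ))‖ ^ 2
        ≤ c / τ * ∫ s in (0:ℝ)..1, f (γ s) * ‖γ' s‖ ^ 2 := by
    intro γ γ' u τ hτ hd hcont
    have hA : ∀ s, HasDerivAt (fun s => ψ ((s - u) / τ)) (w ((s - u) / τ) / τ) s := by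
      intro s
      have h1 : HasDerivAt (fun s : ℝ => (s - u) / τ) (1 / τ) s :=
        ((hasDerivAt_id s).sub_const u).div_const τ
      have := (hψ ((s - u) / τ)).comp s h1
      simpa [div_eq_mul_inv, Function.comp_def] using this
    have hγ : ContinuousOn γ (Set.Icc 0 1) := fun s hs => (hd s hs).continuousAt.continuousWithinAt
    have c1 : Continuous (fun s => γ' (ψ ((s - u) / τ))) :=
      hcont.comp_continuous (by fun_prop) (fun s => hψm _)
    have c2 : Continuous (fun s => γ (ψ ((s - u) / τ))) :=
      hγ.comp_continuous (by fun_prop) (fun s => hψm _)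
    have c3 : Continuous (fun s => w ((s - u) / τ) / τ) := by fun_prop
    have c4 : Continuous (fun s => f (γ (ψ ((s - u) / τ)))) := hfc.comp c2
    have c5 : Continuous (fun s => (w ((s - u) / τ) / τ) • γ' (ψ ((s - u) / τ))) := c3.smul c1
    refine ⟨fun s => HasDerivAt.scomp (h := fun s => ψ ((s - u) / τ)) s (hd _ (hψm _)) (hA s), c5, ?_⟩
    have hcv : ∫ s in u..(u + τ), ((fun x => f (γ x) * ‖γ' x‖ ^ 2) ∘ (fun s => ψ ((s - u) / τ))) s
        * (w ((s - u) / τ) / τ) = ∫ s in (0:ℝ)..1, f (γ s) * ‖γ' s‖ ^ 2 := by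
      have := integral_comp_mul_deriv' (a := u) (b := u + τ) (f := fun s => ψ ((s - u) / τ))
        (f' := fun s => w ((s - u) / τ) / τ) (g := fun x => f (γ x) * ‖γ' x‖ ^ 2)
        (fun s _ => hA s) c3.continuousOn ?_
      · rw [this]
        have e1 : ψ ((u - u) / τ) = 0 := hl _ (by simp)
        have e2 : ψ ((u + τ - u) / τ) = 1 := hr _ (by rw [add_sub_cancel_left, div_self hτ.ne'])
        rw [e1, e2]
      · have : ContinuousOn (fun x => f (γ x) * ‖γ' x‖ ^ 2) (Set.Icc 0 1) :=
          (hfc.comp_continuousOn hγ).mul (by fun_prop)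
        apply this.mono
        rintro _ ⟨s, -, rfl⟩
        exact hψm _
    rw [← hcv, ← integral_const_mul]
    apply integral_mono_on (by linarith)
    · exact (c4.mul (c5.norm.pow 2)).intervalIntegrable _ _
    · exact (continuous_const.mul ((c4.mul (c1.norm.pow 2)).mul c3)).intervalIntegrable _ _
    · intro s _
      simp only [Function.comp_def]
      rw [norm_smul, mul_pow, Real.norm_eq_abs, sq_abs]
      have h1 : w ((s - u) / τ) / τ ≤ c / τ := div_le_div_of_nonneg_right (hwc _) hτ.le
      have h2 : 0 ≤ w ((s - u) / τ) / τ := div_nonneg (hw0 _) hτ.le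
      have h3 : 0 ≤ f (γ (ψ ((s - u) / τ))) * ‖γ' (ψ ((s - u) / τ))‖ ^ 2 :=
        mul_nonneg (hf _) (by positivity)
      have h4 := mul_le_mul_of_nonneg_right h1 (mul_nonneg h2 h3)
      nlinarith
  obtain ⟨α, α', hαd, hαc, hα0, hα1, rfl⟩ := ha
  obtain ⟨β, β', hβd, hβc, hβ0, hβ1, rfl⟩ := hb
  obtain ⟨A1, A2, A3⟩ := piece α α' 0 t ht0 hαd hαc
  obtain ⟨B1, B2, B3⟩ := piece β β' t (1 - t) ht1' hβd hβc
  have hcont := fun s => ((A1 s).add ((B1 s).sub_const q))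
  set γ : ℝ → EuclideanSpace ℝ (Fin n) :=
    fun s => α (ψ ((s - 0) / t)) + (β (ψ ((s - t) / (1 - t))) - q) with hγdef
  set γ' : ℝ → EuclideanSpace ℝ (Fin n) := fun s => (w ((s - 0) / t) / t) • α' (ψ ((s - 0) / t)) +
    (w ((s - t) / (1 - t)) / (1 - t)) • β' (ψ ((s - t) / (1 - t))) with hγ'def
  have hγ' : Continuous γ' := A2.add B2
  have hγd : ∀ s, HasDerivAt γ (γ' s) s := hcont
  have hγ : Continuous γ := continuous_iff_continuousAt.2 fun s => (hγd s).continuousAt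
  refine ⟨_, ⟨γ, γ', fun s _ => hγd s, hγ'.continuousOn, ?_, ?_, rfl⟩, ?_⟩
  · simp only [hγdef]
    rw [hl ((0 - 0) / t) (by simp), hl ((0 - t) / (1 - t)) (div_nonpos_of_nonpos_of_nonneg (by linarith) ht1'.le),
      hα0, hβ0]; simp
  · simp only [hγdef]
    rw [hr ((1 - 0) / t) (by rw [le_div_iff₀ ht0]; linarith), hr ((1 - t) / (1 - t)) (by rw [div_self ht1'.ne']),
      hα1, hβ1]; simp
  · have hii : ∀ x y, IntervalIntegrable (fun s => f (γ s) * ‖γ' s‖ ^ 2) MeasureTheory.volume x y :=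
      fun x y => Continuous.intervalIntegrable (by fun_prop) _ _
    rw [← integral_add_adjacent_intervals (hii 0 t) (hii t 1), mul_add]
    have E1 : ∫ s in (0:ℝ)..t, f (γ s) * ‖γ' s‖ ^ 2 =
        ∫ s in (0:ℝ)..t, f (α (ψ ((s - 0) / t))) * ‖(w ((s - 0) / t) / t) • α' (ψ ((s - 0) / t))‖ ^ 2 := by
      apply integral_congr
      intro s hs
      rw [Set.uIcc_of_le ht0.le] at hs
      have hle : (s - t) / (1 - t) ≤ 0 := div_nonpos_of_nonpos_of_nonneg (by linarith [hs.2]) ht1'.le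
      simp only [hγdef, hγ'def]
      rw [hl _ hle, hwl _ hle, hβ0]; simp
    have E2 : ∫ s in t..1, f (γ s) * ‖γ' s‖ ^ 2 =
        ∫ s in t..1, f (β (ψ ((s - t) / (1 - t)))) * ‖(w ((s - t) / (1 - t)) / (1 - t)) • β' (ψ ((s - t) / (1 - t)))‖ ^ 2 := by
      apply integral_congr
      intro s hs
      rw [Set.uIcc_of_le ht1.le] at hs
      have hle : 1 ≤ (s - 0) / t := by rw [le_div_iff₀ ht0]; linarith [hs.1]
      simp only [hγdef, hγ'def]
      rw [hr _ hle, hwr _ hle, hα1]; simp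
    rw [zero_add] at A3
    rw [add_sub_cancel] at B3
    rw [E1, E2]
    refine (add_le_add A3 B3).trans (le_of_eq ?_)
    ring

lemma pathE_tri (hfc : Continuous f) (hf : ∀ x, 0 ≤ f x) (M : ℝ) (hM : ∀ x, f x ≤ M) {t : ℝ}
    (ht0 : 0 < t) (ht1 : t < 1) :
    sInf (pathE f p r) ≤ sInf (pathE f p q) / t + sInf (pathE f q r) / (1 - t) := by
  have ht1' : 0 < 1 - t := by linarith
  have ne : ∀ x y, (pathE f x y).Nonempty := fun x y => (pathE_line hfc M hM).imp fun _ h => h.1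
  have key : ∀ a ∈ pathE f p q, ∀ b ∈ pathE f q r, sInf (pathE f p r) ≤ a / t + b / (1 - t) := by
    intro a ha b hb
    have h0 : 0 ≤ a / t + b / (1 - t) :=
      add_nonneg (div_nonneg (pathE_nonneg hf ha) ht0.le) (div_nonneg (pathE_nonneg hf hb) ht1'.le)
    have h1 : ∀ c : ℝ, 1 < c → sInf (pathE f p r) ≤ c * (a / t + b / (1 - t)) := by
      intro c hc
      obtain ⟨e, he, hle⟩ := pathE_concat hfc hf ht0 ht1 hc ha hb
      exact (csInf_le (pathE_bdd hf) he).trans hle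
    have h2 : Tendsto (fun c : ℝ => c * (a / t + b / (1 - t))) (nhdsWithin 1 (Set.Ioi 1))
        (nhds (1 * (a / t + b / (1 - t)))) :=
      ((continuous_id.mul continuous_const).tendsto 1).mono_left nhdsWithin_le_nhds
    rw [one_mul] at h2
    exact ge_of_tendsto h2 (by filter_upwards [self_mem_nhdsWithin] with c hc using h1 c hc)
  have k1 : ∀ a ∈ pathE f p q, sInf (pathE f p r) - a / t ≤ sInf (pathE f q r) / (1 - t) := by
    intro a ha
    rw [le_div_iff₀ ht1']
    apply le_csInf (ne _ _)
    intro b hb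
    rw [← le_div_iff₀ ht1']
    linarith [key a ha b hb]
  have k2 : sInf (pathE f p r) - sInf (pathE f q r) / (1 - t) ≤ sInf (pathE f p q) / t := by
    rw [le_div_iff₀ ht0]
    apply le_csInf (ne _ _)
    intro a ha
    rw [← le_div_iff₀ ht0]
    linarith [k1 a ha]
  linarith

lemma pathE_shift (v : EuclideanSpace ℝ (Fin n)) (hv : ∀ x, f (x + v) = f x) :
    pathE f p q ⊆ pathE f (p + v) (q + v) := by
  rintro _ ⟨γ, γ', hd, hc, h0, h1, rfl⟩
  exact ⟨fun s => γ s + v, γ', fun s hs => (hd s hs).add_const v, hc, by simp [h0], by simp [h1],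
    by simp [hv]⟩

lemma pathE_scale (c : ℝ) (z : EuclideanSpace ℝ (Fin n)) {a : ℝ}
    (ha : a ∈ pathE (fun x => f (c • x)) 0 z) : c ^ 2 * a ∈ pathE f 0 (c • z) := by
  obtain ⟨γ, γ', hd, hc, h0, h1, rfl⟩ := ha
  refine ⟨fun s => c • γ s, fun s => c • γ' s, fun s hs => (hd s hs).const_smul c, by fun_prop,
    by simp [h0], by simp [h1], ?_⟩
  rw [← integral_const_mul]
  congr 1; ext s
  rw [norm_smul, mul_pow, Real.norm_eq_abs, sq_abs]; ring

lemma per_lattice (V : EuclideanSpace ℝ (Fin n) → ℝ)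
    (hper : ∀ (x : EuclideanSpace ℝ (Fin n)) (i : Fin n), V (x + EuclideanSpace.single i 1) = V x)
    (k : Fin n → ℤ) (x : EuclideanSpace ℝ (Fin n)) :
    V (x + ∑ i, k i • EuclideanSpace.single i (1:ℝ)) = V x := by
  have : ∀ s : Finset (Fin n), Function.Periodic V (∑ i ∈ s, k i • EuclideanSpace.single i (1:ℝ)) := by
    intro s
    induction s using Finset.induction_on with
    | empty => intro x; simp
    | insert i s hi ih =>
      rw [Finset.sum_insert hi]
      have h : Function.Periodic V (EuclideanSpace.single i (1:ℝ)) := fun x => hper x i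
      exact (h.zsmul (k i)).add_period ih
  exact this _ x

lemma lattice_near (ε : ℝ) (hε : 0 < ε) (x : EuclideanSpace ℝ (Fin n)) :
    ∃ k : Fin n → ℤ, ‖x - ε • ∑ i, k i • EuclideanSpace.single i (1:ℝ)‖ ^ 2 ≤ n * ε ^ 2 := by
  refine ⟨fun i => ⌊x i / ε⌋, ?_⟩
  rw [EuclideanSpace.norm_sq_eq]
  have : (n:ℝ) * ε ^ 2 = ∑ i : Fin n, ε ^ 2 := by simp
  rw [this]
  apply Finset.sum_le_sum
  intro j _
  have e : (x - ε • ∑ i, ⌊x i / ε⌋ • EuclideanSpace.single i (1:ℝ)) j = x j - ε * ⌊x j / ε⌋ := by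
    simp [Finset.sum_apply, Pi.single_apply]
  rw [e, Real.norm_eq_abs, sq_abs]
  have h1 := Int.floor_le (x j / ε)
  have h2 := Int.lt_floor_add_one (x j / ε)
  rw [le_div_iff₀ hε] at h1
  rw [div_lt_iff₀ hε] at h2
  apply pow_le_pow_left₀ <;> nlinarith

end Aux

/-- Properties of the Γ-limit integrand `j̄` of the Jacobi energies (Theorem 4.1 and
    the Finsler bounds): `2E‖z‖² ≤ j̄(z) ≤ 2(E − min V)‖z‖²`, `j̄` convex and
    2-homogeneous. -/
theorem gamma_limit_integrand_bounds
    (n : ℕ) (V : EuclideanSpace ℝ (Fin n) → ℝ)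
    (hV : Continuous V) (hbdd : ∃ C : ℝ, ∀ x, |V x| ≤ C)
    (hper : ∀ (x : EuclideanSpace ℝ (Fin n)) (i : Fin n),
      V (x + EuclideanSpace.single i 1) = V x)
    (hmax : IsGreatest (Set.range V) 0)
    (Vmin : ℝ) (hmin : IsLeast (Set.range V) Vmin)
    (E : ℝ) (hE : 0 < E)
    (jbar : EuclideanSpace ℝ (Fin n) → ℝ)
    (hjbar : ∀ z : EuclideanSpace ℝ (Fin n),
      Tendsto (fun ε : ℝ => sInf {a : ℝ |
          ∃ γ γ' : ℝ → EuclideanSpace ℝ (Fin n),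
            (∀ s ∈ Set.Icc (0:ℝ) 1, HasDerivAt γ (γ' s) s) ∧
            ContinuousOn γ' (Set.Icc (0:ℝ) 1) ∧ γ 0 = 0 ∧ γ 1 = z ∧
            a = ∫ s in (0:ℝ)..1, 2 * (E - V (ε⁻¹ • γ s)) * ‖γ' s‖ ^ 2})
        (nhdsWithin 0 (Set.Ioi 0)) (nhds (jbar z))) :
    (∀ z : EuclideanSpace ℝ (Fin n),
        2 * E * ‖z‖ ^ 2 ≤ jbar z ∧ jbar z ≤ 2 * (E - Vmin) * ‖z‖ ^ 2) ∧
      ConvexOn ℝ Set.univ jbar ∧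
      ∀ (c : ℝ), 0 ≤ c → ∀ z, jbar (c • z) = c ^ 2 * jbar z := by
  have hVle : ∀ x, V x ≤ 0 := fun x => hmax.2 ⟨x, rfl⟩
  have hVge : ∀ x, Vmin ≤ V x := fun x => hmin.2 ⟨x, rfl⟩
  let F : ℝ → EuclideanSpace ℝ (Fin n) → ℝ := fun ε x => 2 * (E - V (ε⁻¹ • x))
  have hF : ∀ ε, Continuous (F ε) := fun ε => by fun_prop
  have hFl : ∀ ε x, 2 * E ≤ F ε x := fun ε x => by
    have := hVle (ε⁻¹ • x); simp only [F]; linarith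
  have hF0 : ∀ ε x, 0 ≤ F ε x := fun ε x => by linarith [hFl ε x]
  set M := 2 * (E - Vmin) with hMdef
  have hFM : ∀ ε x, F ε x ≤ M := fun ε x => by
    have := hVge (ε⁻¹ • x); simp only [F, hMdef]; linarith
  have hM0 : 0 ≤ M := (hF0 1 0).trans (hFM 1 0)
  have hj : ∀ z, Tendsto (fun ε : ℝ => sInf (pathE (F ε) 0 z)) (nhdsWithin 0 (Set.Ioi 0))
      (nhds (jbar z)) := hjbar
  have ne : ∀ ε x y, (pathE (F ε) x y).Nonempty :=
    fun ε x y => (pathE_line (hF ε) M (hFM ε)).imp fun _ h => h.1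
  have upper : ∀ ε p q, sInf (pathE (F ε) p q) ≤ M * ‖q - p‖ ^ 2 := by
    intro ε p q
    obtain ⟨a, ha, hle⟩ := pathE_line (p := p) (q := q) (hF ε) M (hFM ε)
    exact (csInf_le (pathE_bdd (hF0 ε)) ha).trans hle
  have bounds : ∀ z, 2 * E * ‖z‖ ^ 2 ≤ jbar z ∧ jbar z ≤ M * ‖z‖ ^ 2 := by
    intro z
    constructor
    · refine ge_of_tendsto (hj z) (Eventually.of_forall fun ε => ?_)
      apply le_csInf (ne _ _ _)
      intro a ha
      simpa using pathE_lower (hF ε) (2 * E) (by linarith) (hFl ε) ha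
    · refine le_of_tendsto (hj z) (Eventually.of_forall fun ε => ?_)
      simpa using upper ε 0 z
  have hom1 : ∀ c : ℝ, 0 < c → ∀ z, jbar (c • z) ≤ c ^ 2 * jbar z := by
    intro c hc z
    have ht : Tendsto (fun ε : ℝ => ε / c) (nhdsWithin 0 (Set.Ioi 0)) (nhdsWithin 0 (Set.Ioi 0)) := by
      apply tendsto_nhdsWithin_of_tendsto_nhds_of_eventually_within
      · have : Tendsto (fun ε : ℝ => ε / c) (nhds 0) (nhds (0 / c)) :=
          (continuous_id.div_const c).tendsto 0
        rw [zero_div] at this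
        exact this.mono_left nhdsWithin_le_nhds
      · filter_upwards [self_mem_nhdsWithin] with ε hε using div_pos hε hc
    have h1 := ((hj z).comp ht).const_mul (c ^ 2)
    refine le_of_tendsto_of_tendsto' (hj (c • z)) h1 (fun ε => ?_)
    have e : F (ε / c) = fun x => F ε (c • x) := by
      ext x; simp only [F]; rw [smul_smul, inv_div, div_eq_inv_mul]
    simp only [Function.comp_def]
    rw [← div_le_iff₀' (by positivity)]
    apply le_csInf (ne _ _ _)
    intro a ha
    rw [e] at ha
    rw [div_le_iff₀' (by positivity)]
    exact csInf_le (pathE_bdd (hF0 ε)) (pathE_scale c z ha)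
  have hom : ∀ c : ℝ, 0 ≤ c → ∀ z, jbar (c • z) = c ^ 2 * jbar z := by
    intro c hc z
    rcases hc.eq_or_lt with rfl | hc
    · have := bounds 0
      simp at this ⊢
      linarith
    · apply le_antisymm (hom1 c hc z)
      have := hom1 c⁻¹ (by positivity) (c • z)
      rw [smul_smul, inv_mul_cancel₀ hc.ne', one_smul, inv_pow, ← div_eq_inv_mul,
        le_div_iff₀' (by positivity)] at this
      exact this
  have sub1 : ∀ (t τ : ℝ), 0 < t → t < 1 → 0 < τ → τ < 1 → ∀ x y,
      jbar (x + y) ≤ jbar x / t + ((jbar y / (1 - τ)) / (1 - τ)) / (1 - t) := by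
    intro t τ ht0 ht1 hτ0 hτ1 x y
    have key : ∀ ε : ℝ, 0 < ε → sInf (pathE (F ε) 0 (x + y)) ≤ sInf (pathE (F ε) 0 x) / t +
        (M * (n * ε ^ 2) / τ + (sInf (pathE (F ε) 0 y) / (1 - τ) + M * (n * ε ^ 2) / τ) / (1 - τ)) / (1 - t) := by
      intro ε hε
      obtain ⟨k, hk⟩ := lattice_near ε hε x
      set v := ∑ i, k i • EuclideanSpace.single i (1:ℝ) with hv
      have s1 := pathE_tri (p := 0) (q := x) (r := x + y) (hF ε) (hF0 ε) M (hFM ε) ht0 ht1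
      have s2 := pathE_tri (p := x) (q := ε • v) (r := x + y) (hF ε) (hF0 ε) M (hFM ε) hτ0 hτ1
      have s3 := pathE_tri (p := ε • v) (q := y + ε • v) (r := x + y) (hF ε) (hF0 ε) M (hFM ε)
        (t := 1 - τ) (by linarith) (by linarith)
      rw [sub_sub_cancel] at s3
      have s4 : sInf (pathE (F ε) (ε • v) (y + ε • v)) ≤ sInf (pathE (F ε) 0 y) := by
        apply csInf_le_csInf (pathE_bdd (hF0 ε)) (ne _ _ _)
        have := pathE_shift (f := F ε) (p := 0) (q := y) (ε • v) (fun z => by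
          simp only [F]
          rw [smul_add, smul_smul, inv_mul_cancel₀ hε.ne', one_smul, hv, per_lattice V hper])
        rwa [zero_add] at this
      have s5 : sInf (pathE (F ε) x (ε • v)) ≤ M * (n * ε ^ 2) := by
        refine (upper _ _ _).trans (mul_le_mul_of_nonneg_left ?_ hM0)
        rwa [norm_sub_rev]
      have s6 : sInf (pathE (F ε) (y + ε • v) (x + y)) ≤ M * (n * ε ^ 2) := by
        refine (upper _ _ _).trans (mul_le_mul_of_nonneg_left ?_ hM0)
        have : x + y - (y + ε • v) = x - ε • v := by abel
        rwa [this]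
      have q1 : 0 < 1 - t := by linarith
      have q2 : 0 < 1 - τ := by linarith
      refine s1.trans ?_
      gcongr
      refine s2.trans ?_
      gcongr
      refine s3.trans ?_
      gcongr
    have l0 : Tendsto (fun ε : ℝ => M * (n * ε ^ 2) / τ) (nhdsWithin 0 (Set.Ioi 0)) (nhds 0) := by
      have : Tendsto (fun ε : ℝ => M * (n * ε ^ 2) / τ) (nhds 0) (nhds (M * (n * 0 ^ 2) / τ)) :=
        Continuous.tendsto (by fun_prop) 0
      simp only [ne_eq, OfNat.ofNat_ne_zero, not_false_eq_true, zero_pow, mul_zero, zero_div] at this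
      exact this.mono_left nhdsWithin_le_nhds
    have l1 := ((hj x).div_const t).add
      ((l0.add ((((hj y).div_const (1 - τ)).add l0).div_const (1 - τ))).div_const (1 - t))
    simp only [add_zero, zero_add] at l1
    exact le_of_tendsto_of_tendsto (hj (x + y)) l1
      (by filter_upwards [self_mem_nhdsWithin] with ε hε using key ε hε)
  have sub2 : ∀ (t : ℝ), 0 < t → t < 1 → ∀ x y,
      jbar (x + y) ≤ jbar x / t + jbar y / (1 - t) := by
    intro t ht0 ht1 x y
    have l : Tendsto (fun τ : ℝ => jbar x / t + ((jbar y / (1 - τ)) / (1 - τ)) / (1 - t))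
        (nhdsWithin 0 (Set.Ioi 0)) (nhds (jbar x / t + ((jbar y / (1 - 0)) / (1 - 0)) / (1 - t))) := by
      have h1 : Tendsto (fun τ : ℝ => 1 - τ) (nhdsWithin 0 (Set.Ioi 0)) (nhds (1 - 0)) :=
        ((continuous_const.sub continuous_id).tendsto 0).mono_left nhdsWithin_le_nhds
      have h2 : (1:ℝ) - 0 ≠ 0 := by norm_num
      exact (((tendsto_const_nhds.div h1 h2).div h1 h2).div_const _).const_add _
    simp only [sub_zero, div_one] at l
    refine ge_of_tendsto l ?_
    filter_upwards [Ioo_mem_nhdsGT (zero_lt_one (α := ℝ))] with τ hτ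
    exact sub1 t τ ht0 ht1 hτ.1 hτ.2 x y
  refine ⟨bounds, ⟨convex_univ, ?_⟩, hom⟩
  intro x _ y _ a b ha hb hab
  rcases ha.eq_or_lt with rfl | ha
  · have : b = 1 := by linarith
    subst this; simp
  rcases hb.eq_or_lt with rfl | hb
  · have : a = 1 := by linarith
    subst this; simp
  have h := sub2 a ha (by linarith) (a • x) (b • y)
  have hb' : 1 - a = b := by linarith
  rw [hom a ha.le, hom b hb.le, hb'] at h
  refine h.trans (le_of_eq ?_)
  simp only [smul_eq_mul]
  field_simp
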